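/- arXiv:2509.10263 — 2 statements merged into one kernel-verified Lean document; each statement's English description precedes it below -/
import Mathlib

section
/- Let F be a logarithmically homogeneous barrier with negative curvature for a regular cone K ⊂ ℝⁿ, let x, y ∈ int K, and define G = ∫₀¹ F''((1−α)x + αy) dα. Then (1/(1+σₓ(y−x)))·F''(x) ⪯ G ⪯ (1/(1−σₓ(x−y)))·F''(x), and (1−σₓ(x−y))·F''(y) ⪯ G ⪯ (1+σₓ(y−x))·F''(y). -/
open scoped RealInnerProductSpace
open Set

noncomputable section

variable {E : Type*} [NormedAddCommGroup E] [InnerProductSpace ℝ E] [CompleteSpace E]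

/-- The dual cone `K* = {s : ⟨s,x⟩ ≥ 0 for all x ∈ K}`. -/
def dualCone (K : Set E) : Set E := {s | ∀ x ∈ K, 0 ≤ ⟪s, x⟫}

/-- `K` is a regular cone: closed, convex, a cone, pointed, with nonempty interior. -/
def IsRegularCone (K : Set E) : Prop :=
  IsClosed K ∧ Convex ℝ K ∧ (∀ x ∈ K, ∀ t : ℝ, 0 ≤ t → t • x ∈ K) ∧
    (∀ x, x ∈ K → -x ∈ K → x = 0) ∧ (interior K).Nonempty

/-- The Minkowski gauge `σ_x(h) = inf {β ≥ 0 : β • x - h ∈ K}`. -/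
def mink (K : Set E) (x h : E) : ℝ := sInf {β : ℝ | 0 ≤ β ∧ β • x - h ∈ K}

/-- The Hessian `F''(x)` of `F` at `x`, as a continuous linear map. -/
def Hess (F : E → ℝ) (x : E) : E →L[ℝ] E := fderiv ℝ (fun y => gradient F y) x

/-- The directional third derivative `F'''(x;h)`: the directional derivative of the Hessian
of `F` at `x` in the direction `h`, as a continuous linear map. -/
def D3 (F : E → ℝ) (x h : E) : E →L[ℝ] E := fderiv ℝ (fun y => Hess F y) x h

/-- The local norm `‖h‖ₓ = ⟨F''(x) h, h⟩^{1/2}`. -/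
def localNorm (F : E → ℝ) (x h : E) : ℝ := Real.sqrt ⟪Hess F x h, h⟫

/-- `F` is a ϑ-logarithmically homogeneous barrier for `K`: a three times continuously
differentiable convex function on `int K`, with positive definite Hessians, satisfying
`F (t • x) = F x - ϑ ln t`. -/
structure IsLHB (K : Set E) (ϑ : ℝ) (F : E → ℝ) : Prop where
  contDiff : ContDiffOn ℝ 3 F (interior K)
  convexOn : ConvexOn ℝ (interior K) F
  hess_posdef : ∀ x ∈ interior K, ∀ v : E, v ≠ 0 → 0 < ⟪Hess F x v, v⟫
  log_hom : ∀ x ∈ interior K, ∀ t : ℝ, 0 < t → F (t • x) = F x - ϑ * Real.log t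

/-- `F` has negative curvature: `x ↦ ⟨F'(x), u⟩` is concave on `int K` for every `u ∈ K`. -/
def NegCurv (K : Set E) (F : E → ℝ) : Prop :=
  ∀ u ∈ K, ConcaveOn ℝ (interior K) (fun x => ⟪gradient F x, u⟫)

lemma grad_smooth {K : Set E} {ϑ : ℝ} {F : E → ℝ} (hF : IsLHB K ϑ F) :
    ContDiffOn ℝ 2 (fun y => gradient F y) (interior K) := by
  have h := hF.contDiff.fderiv_of_isOpen (m := 2) isOpen_interior (by norm_num)
  exact (InnerProductSpace.toDual ℝ E).symm.contDiff.comp_contDiffOn h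

lemma grad_has {K : Set E} {ϑ : ℝ} {F : E → ℝ} (hF : IsLHB K ϑ F) {x : E}
    (hx : x ∈ interior K) : HasGradientAt F (gradient F x) x :=
  ((hF.contDiff.contDiffAt (isOpen_interior.mem_nhds hx)).differentiableAt
    (by norm_num)).hasGradientAt

lemma hess_has {K : Set E} {ϑ : ℝ} {F : E → ℝ} (hF : IsLHB K ϑ F) {x : E}
    (hx : x ∈ interior K) : HasFDerivAt (fun y => gradient F y) (Hess F x) x :=
  (((grad_smooth hF).contDiffAt (isOpen_interior.mem_nhds hx)).differentiableAt
    (by norm_num)).hasFDerivAt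

lemma hess_cont {K : Set E} {ϑ : ℝ} {F : E → ℝ} (hF : IsLHB K ϑ F) :
    ContinuousOn (Hess F) (interior K) :=
  ((grad_smooth hF).fderiv_of_isOpen (m := 1) isOpen_interior (by norm_num)).continuousOn

lemma cone_add {K : Set E} (hK : IsRegularCone K) {a b : E} (ha : a ∈ K) (hb : b ∈ K) :
    a + b ∈ K := by
  obtain ⟨_, hc, hs, _⟩ := hK
  have := hs _ (hc ha hb (by norm_num : (0:ℝ) ≤ 1/2) (by norm_num : (0:ℝ) ≤ 1/2) (by norm_num))
    2 (by norm_num)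
  rw [smul_add, smul_smul, smul_smul] at this
  norm_num at this
  exact this

lemma int_add {K : Set E} (hK : IsRegularCone K) {a b : E} (ha : a ∈ interior K) (hb : b ∈ K) :
    a + b ∈ interior K := by
  have h : (fun z => z - b) ⁻¹' interior K ⊆ K := by
    intro z hz
    have := cone_add hK (interior_subset hz) hb
    simpa using this
  refine interior_maximal h (isOpen_interior.preimage (by fun_prop)) ?_
  simpa using ha

lemma int_smul {K : Set E} (hK : IsRegularCone K) {a : E} (ha : a ∈ interior K) {t : ℝ}
    (ht : 0 < t) : t • a ∈ interior K := by
  have h : (fun z => t⁻¹ • z) ⁻¹' interior K ⊆ K := by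
    intro z hz
    have := hK.2.2.1 _ (interior_subset hz) t ht.le
    simpa [smul_smul, ht.ne'] using this
  refine interior_maximal h (isOpen_interior.preimage (by fun_prop)) ?_
  simpa [smul_smul, ht.ne'] using ha

/-- derivative of `F` along a line -/
lemma line_deriv {K : Set E} {ϑ : ℝ} {F : E → ℝ} (hF : IsLHB K ϑ F) (p v : E) (t : ℝ)
    (h : p + t • v ∈ interior K) :
    HasDerivAt (fun s : ℝ => F (p + s • v)) ⟪gradient F (p + t • v), v⟫ t := by
  have h1 : HasDerivAt (fun s : ℝ => p + s • v) v t := by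
    simpa using ((hasDerivAt_id t).smul_const v).const_add p
  have h2 := (grad_has hF h).hasFDerivAt.comp_hasDerivAt t h1
  rw [InnerProductSpace.toDual_apply_apply] at h2
  exact h2

lemma line_deriv2 {K : Set E} {ϑ : ℝ} {F : E → ℝ} (hF : IsLHB K ϑ F) (p v : E) (t : ℝ)
    (h : p + t • v ∈ interior K) :
    HasDerivAt (fun s : ℝ => ⟪gradient F (p + s • v), v⟫) ⟪Hess F (p + t • v) v, v⟫ t := by
  have h1 : HasDerivAt (fun s : ℝ => p + s • v) v t := by
    simpa using ((hasDerivAt_id t).smul_const v).const_add p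
  have h2 := (hess_has hF h).comp_hasDerivAt t h1
  simpa using h2.inner ℝ (hasDerivAt_const t v)

lemma sym_diff {K : Set E} {ϑ : ℝ} {F : E → ℝ} (hK : IsRegularCone K) (hF : IsLHB K ϑ F)
    (hN : NegCurv K F) {w u d : E} (hu : u ∈ K) (hw : w ∈ interior K)
    (h1 : w + d ∈ interior K) (h2 : w - d ∈ interior K) :
    F (w + u + d) + F (w + u - d) - 2 * F (w + u) ≤ F (w + d) + F (w - d) - 2 * F w := by
  have hm : ∀ p ∈ interior K, ∀ t : ℝ, 0 ≤ t → p + t • u ∈ interior K := fun p hp t ht =>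
    int_add hK hp (hK.2.2.1 _ hu t ht)
  have hd : ∀ t : ℝ, 0 ≤ t → HasDerivAt (fun s : ℝ => F (w + d + s • u) + F (w - d + s • u)
      - 2 * F (w + s • u)) (⟪gradient F (w + d + t • u), u⟫ + ⟪gradient F (w - d + t • u), u⟫
      - 2 * ⟪gradient F (w + t • u), u⟫) t := fun t ht =>
    ((line_deriv hF _ u t (hm _ h1 t ht)).add (line_deriv hF _ u t (hm _ h2 t ht))).sub
      ((line_deriv hF _ u t (hm _ hw t ht)).const_mul 2)
  have ha : AntitoneOn (fun s : ℝ => F (w + d + s • u) + F (w - d + s • u)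
      - 2 * F (w + s • u)) (Icc 0 1) := by
    apply antitoneOn_of_deriv_nonpos (convex_Icc 0 1)
    · exact fun t ht => (hd t ht.1).continuousAt.continuousWithinAt
    · intro t ht
      rw [interior_Icc] at ht
      exact (hd t ht.1.le).differentiableAt.differentiableWithinAt
    · intro t ht
      rw [interior_Icc] at ht
      rw [(hd t ht.1.le).deriv]
      have := (hN u hu).2 (hm _ h1 t ht.1.le) (hm _ h2 t ht.1.le) (by norm_num : (0:ℝ) ≤ 1/2)
        (by norm_num : (0:ℝ) ≤ 1/2) (by norm_num)
      have e : (1/2:ℝ) • (w + d + t • u) + (1/2:ℝ) • (w - d + t • u) = w + t • u := by module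
      simp only [e, smul_eq_mul] at this
      linarith
  have := ha (left_mem_Icc.2 zero_le_one) (right_mem_Icc.2 zero_le_one) zero_le_one
  simp only [one_smul, zero_smul, add_zero] at this
  rw [show w + u + d = w + d + u by abel, show w + u - d = w - d + u by abel]
  exact this

open Filter Topology in
lemma hess_anti {K : Set E} {ϑ : ℝ} {F : E → ℝ} (hK : IsRegularCone K) (hF : IsLHB K ϑ F)
    (hN : NegCurv K F) {w u : E} (hu : u ∈ K) (hw : w ∈ interior K) (v : E) :
    ⟪Hess F (w + u) v, v⟫ ≤ ⟪Hess F w v, v⟫ := by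
  by_contra hlt
  push Not at hlt
  set D : E → ℝ → ℝ := fun p s => F (p + s • v) + F (p + s • (-v)) - 2 * F p with hD
  have hev : ∀ p ∈ interior K, ∀ q : E, ∀ᶠ s in 𝓝 (0:ℝ), p + s • q ∈ interior K := by
    intro p hp q
    have hc : ContinuousAt (fun s : ℝ => p + s • q) 0 := by fun_prop
    exact hc.eventually_mem (isOpen_interior.mem_nhds (by simpa using hp))
  have hD1 : ∀ p ∈ interior K, ∀ᶠ s in 𝓝 (0:ℝ), HasDerivAt (D p)
      (⟪gradient F (p + s • v), v⟫ + ⟪gradient F (p + s • (-v)), -v⟫) s := by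
    intro p hp
    filter_upwards [hev p hp v, hev p hp (-v)] with s h1 h2
    exact ((line_deriv hF _ v s h1).add (line_deriv hF _ (-v) s h2)).sub_const _
  have hD2 : ∀ p ∈ interior K, HasDerivAt (fun s : ℝ =>
      ⟪gradient F (p + s • v), v⟫ + ⟪gradient F (p + s • (-v)), -v⟫)
      (2 * ⟪Hess F p v, v⟫) 0 := by
    intro p hp
    have := (line_deriv2 hF p v 0 (by simpa using hp)).add
      (line_deriv2 hF p (-v) 0 (by simpa using hp))
    refine this.congr_deriv ?_
    simp
    ring
  have hz := int_add hK hw hu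
  set g : ℝ → ℝ := fun s => D w s - D (w + u) s with hg
  have hdg : deriv g =ᶠ[𝓝 0] fun s : ℝ =>
      (⟪gradient F (w + s • v), v⟫ + ⟪gradient F (w + s • (-v)), -v⟫) -
      (⟪gradient F (w + u + s • v), v⟫ + ⟪gradient F (w + u + s • (-v)), -v⟫) := by
    filter_upwards [hD1 w hw, hD1 _ hz] with s h1 h2
    exact (h1.sub h2).deriv
  have hddg : deriv (deriv g) 0 = 2 * ⟪Hess F w v, v⟫ - 2 * ⟪Hess F (w + u) v, v⟫ := by
    rw [hdg.deriv_eq]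
    exact ((hD2 w hw).sub (hD2 _ hz)).deriv
  have hneg : deriv (deriv g) 0 < 0 := by rw [hddg]; linarith
  have hmax : IsLocalMax g 0 := by
    apply isLocalMax_of_deriv_deriv_neg hneg
    · rw [hdg.eq_of_nhds]; simp
    · exact ((hD1 w hw).self_of_nhds.sub (hD1 _ hz).self_of_nhds).continuousAt
  have h0 : g 0 = 0 := by simp [hg, hD]; ring
  have hge : ∀ᶠ s in 𝓝 (0:ℝ), 0 ≤ g s := by
    filter_upwards [hev w hw v, hev w hw (-v)] with s h1 h2
    have := sym_diff hK hF hN hu hw h1 (by simpa [sub_eq_add_neg] using h2)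
    simp only [hg, hD, smul_neg, ← sub_eq_add_neg]
    linarith
  have hzero : g =ᶠ[𝓝 0] fun _ => 0 := by
    filter_upwards [hmax, hge] with s h1 h2
    rw [h0] at h1
    exact le_antisymm h1 h2
  rw [hzero.deriv.deriv_eq] at hneg
  simp at hneg

lemma grad_hom {K : Set E} {ϑ : ℝ} {F : E → ℝ} (hK : IsRegularCone K) (hF : IsLHB K ϑ F)
    {x : E} (hx : x ∈ interior K) {t : ℝ} (ht : 0 < t) :
    t • gradient F (t • x) = gradient F x := by
  have h1 : HasFDerivAt (fun z : E => t • z) (t • ContinuousLinearMap.id ℝ E) x :=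
    (hasFDerivAt_id x).const_smul t
  have h2 := (grad_has hF (int_smul hK hx ht)).hasFDerivAt.comp x h1
  have h3 : HasFDerivAt (F ∘ (fun z : E => t • z)) (InnerProductSpace.toDual ℝ E (gradient F x)) x := by
    have := (grad_has hF hx).hasFDerivAt.sub_const (ϑ * Real.log t)
    refine this.congr_of_eventuallyEq ?_
    filter_upwards [isOpen_interior.mem_nhds hx] with z hz
    exact hF.log_hom z hz t ht
  have h4 := h2.unique h3
  refine ext_inner_right ℝ fun v => ?_
  have := DFunLike.congr_fun h4 v
  simpa [inner_smul_left, inner_smul_right] using this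

lemma hess_hom {K : Set E} {ϑ : ℝ} {F : E → ℝ} (hK : IsRegularCone K) (hF : IsLHB K ϑ F)
    {x : E} (hx : x ∈ interior K) {t : ℝ} (ht : 0 < t) (v : E) :
    t ^ 2 * ⟪Hess F (t • x) v, v⟫ = ⟪Hess F x v, v⟫ := by
  have h1 : HasFDerivAt (fun z : E => t • z) (t • ContinuousLinearMap.id ℝ E) x :=
    (hasFDerivAt_id x).const_smul t
  have h2 := ((hess_has hF (int_smul hK hx ht)).comp x h1).const_smul t
  have h3 := (hess_has hF hx).congr_of_eventuallyEq (f₁ := fun z => t • gradient F (t • z)) (by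
    filter_upwards [isOpen_interior.mem_nhds hx] with z hz
    exact grad_hom hK hF hz ht)
  have h4 := DFunLike.congr_fun (h2.unique h3) v
  rw [← h4]
  simp [inner_smul_left]
  ring

lemma hess_cmp {K : Set E} {ϑ : ℝ} {F : E → ℝ} (hK : IsRegularCone K) (hF : IsLHB K ϑ F)
    (hN : NegCurv K F) {z w : E} (hz : z ∈ interior K) (hw : w ∈ interior K) {a b : ℝ}
    (ha : 0 < a) (hb : 0 < b) (h : a • z - b • w ∈ K) (v : E) :
    b ^ 2 * ⟪Hess F z v, v⟫ ≤ a ^ 2 * ⟪Hess F w v, v⟫ := by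
  have h1 := hess_anti hK hF hN h (int_smul hK hw hb) v
  rw [add_sub_cancel] at h1
  rw [← hess_hom hK hF hz ha v, ← hess_hom hK hF hw hb v]
  have : 0 ≤ a ^ 2 * b ^ 2 := by positivity
  nlinarith [mul_le_mul_of_nonneg_left h1 this]

lemma mink_nonneg (K : Set E) (x h : E) : 0 ≤ mink K x h :=
  Real.sInf_nonneg fun _ hb => hb.1

open Filter Topology in
lemma mink_mem {K : Set E} (hK : IsRegularCone K) {x : E} (hx : x ∈ interior K) (h : E) :
    mink K x h • x - h ∈ K := by
  have hc : IsClosed {β : ℝ | 0 ≤ β ∧ β • x - h ∈ K} :=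
    isClosed_Ici.inter (hK.1.preimage (by fun_prop : Continuous fun β : ℝ => β • x - h))
  have hne : {β : ℝ | 0 ≤ β ∧ β • x - h ∈ K}.Nonempty := by
    have hcx : ContinuousAt (fun s : ℝ => x - s • h) 0 := by fun_prop
    have := hcx.eventually_mem (isOpen_interior.mem_nhds (by simpa using hx))
    obtain ⟨s, hs, hs0⟩ := ((this.filter_mono nhdsWithin_le_nhds).and
      (self_mem_nhdsWithin : Ioi (0:ℝ) ∈ 𝓝[>] 0)).exists
    have hs0 : 0 < s := hs0
    refine ⟨s⁻¹, (inv_pos.2 hs0).le, ?_⟩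
    have := hK.2.2.1 _ (interior_subset hs) s⁻¹ (inv_pos.2 hs0).le
    simpa [smul_sub, smul_smul, hs0.ne'] using this
  exact (hc.csInf_mem hne ⟨0, fun _ hb => hb.1⟩).2

open Filter Topology in
lemma mink_lt {K : Set E} {x y : E} (hy : y ∈ interior K) :
    mink K x (x - y) < 1 := by
  have hcx : ContinuousAt (fun s : ℝ => y - s • x) 0 := by fun_prop
  have := hcx.eventually_mem (isOpen_interior.mem_nhds (by simpa using hy))
  obtain ⟨s, ⟨hs, hs1⟩, hs0⟩ := (((this.and (eventually_lt_nhds (zero_lt_one' ℝ))).filter_mono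
    nhdsWithin_le_nhds).and (self_mem_nhdsWithin : Ioi (0:ℝ) ∈ 𝓝[>] 0)).exists
  have hs0 : 0 < s := hs0
  have : mink K x (x - y) ≤ 1 - s := by
    refine csInf_le ⟨0, fun _ hb => hb.1⟩ ⟨by linarith, ?_⟩
    have e : (1 - s) • x - (x - y) = y - s • x := by module
    rw [e]
    exact interior_subset hs
  linarith

lemma one_add_pos {c α : ℝ} (hc : -1 < c) (h : α ∈ Icc (0:ℝ) 1) : 0 < 1 + c * α := by
  rcases le_total 0 c with h0 | h0
  · have := mul_nonneg h0 h.1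
    linarith
  · nlinarith [mul_nonneg (neg_nonneg.2 h0) (sub_nonneg.2 h.2)]

lemma int_cont {c : ℝ} (hc : -1 < c) :
    ContinuousOn (fun α : ℝ => 1 / (1 + c * α) ^ 2) (Icc 0 1) := by
  refine ContinuousOn.div (by fun_prop) (by fun_prop) fun α h => ?_
  exact pow_ne_zero _ (one_add_pos hc h).ne'

lemma int_val {c : ℝ} (hc : -1 < c) :
    ∫ α in (0:ℝ)..1, 1 / (1 + c * α) ^ 2 = 1 / (1 + c) := by
  rw [intervalIntegral.integral_eq_sub_of_hasDerivAt (f := fun α => α / (1 + c * α))]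
  · simp
  · intro α h
    rw [uIcc_of_le zero_le_one] at h
    have := (one_add_pos hc h).ne'
    have h2 : HasDerivAt (fun α : ℝ => 1 + c * α) c α := by
      simpa using ((hasDerivAt_id α).const_mul c).const_add 1
    refine ((hasDerivAt_id α).div h2 this).congr_deriv ?_
    simp only [id]
    congr 1
    ring
  · apply ContinuousOn.intervalIntegrable
    rw [uIcc_of_le zero_le_one]
    exact int_cont hc

lemma upper {f : ℝ → ℝ} {c A : ℝ} (hc : -1 < c) (hf : ContinuousOn f (Icc 0 1))
    (h : ∀ α ∈ Icc (0:ℝ) 1, (1 + c * α) ^ 2 * f α ≤ A) :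
    ∫ α in (0:ℝ)..1, f α ≤ 1 / (1 + c) * A := by
  rw [← int_val hc, ← intervalIntegral.integral_mul_const]
  apply intervalIntegral.integral_mono_on zero_le_one
  · exact ContinuousOn.intervalIntegrable (by rwa [uIcc_of_le zero_le_one])
  · exact ContinuousOn.intervalIntegrable (by
      rw [uIcc_of_le zero_le_one]; exact (int_cont hc).mul continuousOn_const)
  · intro α hα
    have := one_add_pos hc hα
    rw [one_div_mul_eq_div, le_div_iff₀ (by positivity), mul_comm]
    exact h α hα

lemma lower {f : ℝ → ℝ} {c A : ℝ} (hc : -1 < c) (hf : ContinuousOn f (Icc 0 1))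
    (h : ∀ α ∈ Icc (0:ℝ) 1, A ≤ (1 + c * α) ^ 2 * f α) :
    1 / (1 + c) * A ≤ ∫ α in (0:ℝ)..1, f α := by
  have := upper (f := fun α => - f α) (A := -A) hc hf.neg (fun α hα => by
    have := h α hα
    linarith)
  rw [intervalIntegral.integral_neg] at this
  linarith

/-- For a logarithmically homogeneous barrier `F` with negative curvature on a
regular cone `K` and `x, y ∈ int K`, the matrix `G = ∫₀¹ F''((1−α)x + αy) dα` satisfies
`(1/(1+σₓ(y−x))) F''(x) ⪯ G ⪯ (1/(1−σₓ(x−y))) F''(x)` and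
`(1−σₓ(x−y)) F''(y) ⪯ G ⪯ (1+σₓ(y−x)) F''(y)` (as quadratic forms). -/
theorem stmt5 {n : ℕ} (K : Set (EuclideanSpace ℝ (Fin n))) (ϑ : ℝ)
    (F : EuclideanSpace ℝ (Fin n) → ℝ)
    (hK : IsRegularCone K) (hF : IsLHB K ϑ F) (hNC : NegCurv K F)
    (x : EuclideanSpace ℝ (Fin n)) (hx : x ∈ interior K)
    (y : EuclideanSpace ℝ (Fin n)) (hy : y ∈ interior K) :
    let G : EuclideanSpace ℝ (Fin n) →L[ℝ] EuclideanSpace ℝ (Fin n) :=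
      ∫ α in (0:ℝ)..1, Hess F ((1 - α) • x + α • y)
    (∀ v, (1 / (1 + mink K x (y - x))) * ⟪Hess F x v, v⟫ ≤ ⟪G v, v⟫) ∧
    (∀ v, ⟪G v, v⟫ ≤ (1 / (1 - mink K x (x - y))) * ⟪Hess F x v, v⟫) ∧
    (∀ v, (1 - mink K x (x - y)) * ⟪Hess F y v, v⟫ ≤ ⟪G v, v⟫) ∧
    (∀ v, ⟪G v, v⟫ ≤ (1 + mink K x (y - x)) * ⟪Hess F y v, v⟫) := by
  intro G
  have hp : ∀ α ∈ Icc (0:ℝ) 1, (1 - α) • x + α • y ∈ interior K := fun α hα =>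
    hK.2.1.interior hx hy (by linarith [hα.2]) hα.1 (by ring)
  have hcH : ContinuousOn (fun α : ℝ => Hess F ((1 - α) • x + α • y)) (Icc 0 1) :=
    (hess_cont hF).comp (by fun_prop) hp
  have hG : ∀ v, ⟪G v, v⟫ = ∫ α in (0:ℝ)..1, ⟪Hess F ((1 - α) • x + α • y) v, v⟫ := by
    intro v
    have hi : IntervalIntegrable (fun α : ℝ => Hess F ((1 - α) • x + α • y))
        MeasureTheory.volume 0 1 :=
      ContinuousOn.intervalIntegrable (by rwa [uIcc_of_le zero_le_one])
    have := ((innerSL ℝ v).comp (ContinuousLinearMap.apply ℝ _ v)).intervalIntegral_comp_comm hi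
    simp only [ContinuousLinearMap.comp_apply, ContinuousLinearMap.apply_apply,
      innerSL_apply_apply] at this
    rw [real_inner_comm, ← this]
    simp only [real_inner_comm]
  have hcq : ∀ v, ContinuousOn (fun α : ℝ => ⟪Hess F ((1 - α) • x + α • y) v, v⟫) (Icc 0 1) :=
    fun v => (hcH.clm_apply continuousOn_const).inner continuousOn_const
  set τ := mink K x (y - x) with hτ
  set σ := mink K x (x - y) with hσ
  have hτ0 : 0 ≤ τ := mink_nonneg _ _ _
  have hσ0 : 0 ≤ σ := mink_nonneg _ _ _
  have hσ1 : σ < 1 := mink_lt hy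
  have hτm : τ • x - (y - x) ∈ K := mink_mem hK hx _
  have hσm : σ • x - (x - y) ∈ K := mink_mem hK hx _
  have hsm := hK.2.2.1
  refine ⟨fun v => ?_, fun v => ?_, fun v => ?_, fun v => ?_⟩
  · rw [hG]
    refine lower (by linarith) (hcq v) fun α hα => ?_
    have := hess_cmp hK hF hNC hx (hp α hα) (a := 1 + τ * α) (b := 1)
      (one_add_pos (by linarith) hα) one_pos (by
        convert hsm _ hτm α hα.1 using 1
        module) v
    simpa using this
  · rw [hG, sub_eq_add_neg 1 σ]
    refine upper (by linarith) (hcq v) fun α hα => ?_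
    have := hess_cmp hK hF hNC (hp α hα) hx (a := 1) (b := 1 + (-σ) * α)
      one_pos (one_add_pos (by linarith) hα) (by
        convert hsm _ hσm α hα.1 using 1
        module) v
    simpa using this
  · rw [hG]
    have h0 : 0 < 1 - σ := by linarith
    have h1 := lower (c := -σ) (A := (1 - σ) ^ 2 * ⟪Hess F y v, v⟫) (by linarith) (hcq v)
      fun α hα => hess_cmp hK hF hNC hy (hp α hα) (a := 1 + (-σ) * α) (b := 1 - σ)
        (one_add_pos (by linarith) hα) h0 (by
          convert hsm _ hσm (1 - α) (by linarith [hα.2]) using 1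
          module) v
    refine le_trans (le_of_eq ?_) h1
    rw [← sub_eq_add_neg]
    field_simp
  · rw [hG]
    have h0 : 0 < 1 + τ := by linarith
    have h1 := upper (c := τ) (A := (1 + τ) ^ 2 * ⟪Hess F y v, v⟫) (by linarith) (hcq v)
      fun α hα => hess_cmp hK hF hNC (hp α hα) hy (a := 1 + τ) (b := 1 + τ * α)
        h0 (one_add_pos (by linarith) hα) (by
          convert hsm _ hτm (1 - α) (by linarith [hα.2]) using 1
          module) v
    refine le_trans h1 (le_of_eq ?_)
    field_simp
end
end

section
/- Let F be a ϑ-LHSCB for a regular cone K ⊂ ℝⁿ. Then for every x ∈ int K and every u ∈ K, ⟨−F'(x), u⟩ ≤ √ϑ·‖u‖ₓ ≤ √ϑ·⟨−F'(x), u⟩. -/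
open scoped RealInnerProductSpace
open Set

noncomputable section

variable {E : Type*} [NormedAddCommGroup E] [InnerProductSpace ℝ E] [CompleteSpace E]

/-- `F` is a ϑ-logarithmically homogeneous self-concordant barrier (ϑ-LHSCB) for `K`:
a three times continuously differentiable convex function on `int K`, with positive definite
Hessians, satisfying `F (t • x) = F x - ϑ ln t` and the self-concordance condition
`F'''(x;h) ⪯ 2 ‖h‖ₓ F''(x)` (as quadratic forms). -/
structure IsLHSCB (K : Set E) (ϑ : ℝ) (F : E → ℝ) : Prop where
  contDiff : ContDiffOn ℝ 3 F (interior K)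
  convexOn : ConvexOn ℝ (interior K) F
  hess_posdef : ∀ x ∈ interior K, ∀ v : E, v ≠ 0 → 0 < ⟪Hess F x v, v⟫
  log_hom : ∀ x ∈ interior K, ∀ t : ℝ, 0 < t → F (t • x) = F x - ϑ * Real.log t
  self_conc : ∀ x ∈ interior K, ∀ h v : E,
    ⟪D3 F x h v, v⟫ ≤ 2 * localNorm F x h * ⟪Hess F x v, v⟫

open Filter Topology

lemma scalar_aux (p g g' : ℝ → ℝ) (hp : ∀ t, 0 ≤ t → HasDerivAt p (g t) t)
    (hg : ∀ t, 0 ≤ t → HasDerivAt g (g' t) t) (pos : ∀ t, 0 ≤ t → 0 < g t)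
    (hsc : ∀ t, 0 ≤ t → -g' t ≤ 2 * √(g t) * g t) (lim : Tendsto p atTop (𝓝 0)) :
    √(g 0) ≤ - p 0 := by
  set r : ℝ := (√(g 0))⁻¹ with hr
  have r0 : 0 < r := inv_pos.2 (Real.sqrt_pos.2 (pos 0 le_rfl))
  have hd : ∀ t, 0 ≤ t → HasDerivAt (fun t => t - (√(g t))⁻¹)
      (1 - -(g' t / (2 * √(g t))) / (√(g t)) ^ 2) t := fun t ht =>
    (hasDerivAt_id t).sub (((hg t ht).sqrt (pos t ht).ne').inv (Real.sqrt_pos.2 (pos t ht)).ne')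
  have m1 : MonotoneOn (fun t => t - (√(g t))⁻¹) (Ici 0) := by
    refine monotoneOn_of_hasDerivWithinAt_nonneg (convex_Ici 0)
      (fun t ht => (hd t ht).continuousAt.continuousWithinAt)
      (fun t ht => (hd t (interior_subset ht)).hasDerivWithinAt) ?_
    intro t ht
    have ht : 0 ≤ t := interior_subset ht
    have h1 := hsc t ht
    have h2 := pos t ht
    have h3 := Real.sqrt_pos.2 h2
    rw [Real.sq_sqrt h2.le, neg_div, sub_neg_eq_add, div_div]
    have : -1 ≤ g' t / (2 * √(g t) * g t) := by
      rw [le_div_iff₀ (by positivity)]; linarith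
    linarith
  have lb : ∀ t, 0 ≤ t → ((r + t) ^ 2)⁻¹ ≤ g t := by
    intro t ht
    have h := m1 (mem_Ici.2 le_rfl) (mem_Ici.2 ht) ht
    simp only at h
    have h3 := Real.sqrt_pos.2 (pos t ht)
    have h4 : (√(g t))⁻¹ ≤ r + t := by rw [hr]; linarith
    have h5 : (r + t)⁻¹ ≤ √(g t) := by
      rw [inv_le_comm₀ (by positivity) h3]; exact h4
    rw [← inv_pow]
    calc _ ≤ (√(g t)) ^ 2 := by gcongr
      _ = _ := Real.sq_sqrt (pos t ht).le
  have hd2 : ∀ t, 0 ≤ t → HasDerivAt (fun t => p t + (r + t)⁻¹) (g t + -1 / (r + t) ^ 2) t :=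
    fun t ht => (hp t ht).add (((hasDerivAt_id t).const_add r).inv (by simp; positivity))
  have m2 : MonotoneOn (fun t => p t + (r + t)⁻¹) (Ici 0) := by
    refine monotoneOn_of_hasDerivWithinAt_nonneg (convex_Ici 0)
      (fun t ht => (hd2 t ht).continuousAt.continuousWithinAt)
      (fun t ht => (hd2 t (interior_subset ht)).hasDerivWithinAt) ?_
    intro t ht
    have := lb t (interior_subset ht)
    rw [neg_div, one_div]; linarith
  have l2 : Tendsto (fun t => p t + (r + t)⁻¹) atTop (𝓝 (0 + 0)) :=
    lim.add (tendsto_inv_atTop_zero.comp (tendsto_atTop_add_const_left _ r tendsto_id))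
  have := ge_of_tendsto l2 ((eventually_ge_atTop 0).mono fun t ht =>
    m2 (mem_Ici.2 le_rfl) (mem_Ici.2 ht) ht)
  simp only [add_zero, hr, inv_inv] at this
  linarith

def gradL (E : Type*) [NormedAddCommGroup E] [InnerProductSpace ℝ E] [CompleteSpace E] :
    (E →L[ℝ] ℝ) →L[ℝ] E where
  toFun := fun f => (InnerProductSpace.toDual ℝ E).symm f
  map_add' := by intros; simp
  map_smul' := by intros; simp
  cont := (InnerProductSpace.toDual ℝ E).symm.continuous

lemma inner_gradient (F : E → ℝ) (y v : E) : ⟪gradient F y, v⟫ = fderiv ℝ F y v := by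
  simp [gradient]

lemma contDiffOn_gradient {F : E → ℝ} {U : Set E} (hU : IsOpen U) (h : ContDiffOn ℝ 3 F U) :
    ContDiffOn ℝ 2 (fun y => gradient F y) U := by
  have h1 : ContDiffOn ℝ 2 (fderiv ℝ F) U := h.fderiv_of_isOpen hU (by norm_num)
  exact (gradL E).contDiff.comp_contDiffOn h1

lemma contDiffOn_hess {F : E → ℝ} {U : Set E} (hU : IsOpen U) (h : ContDiffOn ℝ 3 F U) :
    ContDiffOn ℝ 1 (fun y => Hess F y) U :=
  (contDiffOn_gradient hU h).fderiv_of_isOpen hU (by norm_num)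

lemma hasFDerivAt_gradient {F : E → ℝ} {U : Set E} (hU : IsOpen U) (h : ContDiffOn ℝ 3 F U)
    {y : E} (hy : y ∈ U) : HasFDerivAt (fun y => gradient F y) (Hess F y) y :=
  (((contDiffOn_gradient hU h).contDiffAt (hU.mem_nhds hy)).differentiableAt
    (by norm_num)).hasFDerivAt

lemma hasFDerivAt_hess {F : E → ℝ} {U : Set E} (hU : IsOpen U) (h : ContDiffOn ℝ 3 F U)
    {y : E} (hy : y ∈ U) :
    HasFDerivAt (fun y => Hess F y) (fderiv ℝ (fun y => Hess F y) y) y :=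
  (((contDiffOn_hess hU h).contDiffAt (hU.mem_nhds hy)).differentiableAt
    (by norm_num)).hasFDerivAt

lemma hess_symm {F : E → ℝ} {U : Set E} (hU : IsOpen U) (h : ContDiffOn ℝ 3 F U)
    {y : E} (hy : y ∈ U) (v w : E) : ⟪Hess F y v, w⟫ = ⟪Hess F y w, v⟫ := by
  have hs : IsSymmSndFDerivAt ℝ F y :=
    (h.contDiffAt (hU.mem_nhds hy)).isSymmSndFDerivAt (by simp; norm_num)
  have key : ∀ a b : E, ⟪Hess F y a, b⟫ = fderiv ℝ (fderiv ℝ F) y a b := by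
    intro a b
    have hd : DifferentiableAt ℝ (fderiv ℝ F) y :=
      ((h.fderiv_of_isOpen (m := 2) hU (by norm_num)).contDiffAt
        (hU.mem_nhds hy)).differentiableAt (by norm_num)
    have h1 : HasFDerivAt (fun z => gradient F z) ((gradL E).comp (fderiv ℝ (fderiv ℝ F) y)) y :=
      (gradL E).hasFDerivAt.comp y hd.hasFDerivAt
    rw [Hess, h1.fderiv]
    simp [gradL]
  rw [key, key]
  exact hs v w

open scoped Pointwise in
lemma smul_mem_interior' {K : Set E} (hK : IsRegularCone K) {x : E} (hx : x ∈ interior K)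
    {t : ℝ} (ht : 0 < t) : t • x ∈ interior K := by
  have h1 : t • interior K ⊆ K := by
    rintro _ ⟨y, hy, rfl⟩
    exact hK.2.2.1 y (interior_subset hy) t ht.le
  exact interior_maximal h1 (isOpen_interior.smul₀ ht.ne') ⟨x, hx, rfl⟩

lemma add_mem_interior' {K : Set E} (hK : IsRegularCone K) {x u : E} (hx : x ∈ interior K)
    (hu : u ∈ K) : x + u ∈ interior K := by
  have h := hK.2.1.combo_interior_self_mem_interior hx hu (a := 1/2) (b := 1/2)
    (by norm_num) (by norm_num) (by norm_num)
  have h2 := smul_mem_interior' hK h (t := 2) (by norm_num)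
  simpa [smul_smul] using h2

lemma gradient_smul' {K : Set E} (hK : IsRegularCone K) {ϑ : ℝ} {F : E → ℝ} (hF : IsLHSCB K ϑ F)
    {x : E} (hx : x ∈ interior K) {t : ℝ} (ht : 0 < t) :
    gradient F (t • x) = t⁻¹ • gradient F x := by
  have hd : ∀ y ∈ interior K, DifferentiableAt ℝ F y := fun y hy =>
    (hF.contDiff.contDiffAt (isOpen_interior.mem_nhds hy)).differentiableAt (by norm_num)
  have h1 : HasFDerivAt (fun y => F (t • y))
      ((fderiv ℝ F (t • x)).comp (t • ContinuousLinearMap.id ℝ E)) x :=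
    (hd _ (smul_mem_interior' hK hx ht)).hasFDerivAt.comp x ((hasFDerivAt_id x).const_smul t)
  have h2 : HasFDerivAt (fun y => F (t • y)) (fderiv ℝ F x) x := by
    refine ((hd x hx).hasFDerivAt.sub_const (ϑ * Real.log t)).congr_of_eventuallyEq ?_
    filter_upwards [isOpen_interior.mem_nhds hx] with y hy
    exact hF.log_hom y hy t ht
  have h3 := h1.unique h2
  refine ext_inner_right ℝ fun v => ?_
  rw [inner_smul_left, inner_gradient, inner_gradient, ← h3]
  simp [ht.ne']

lemma hess_self {K : Set E} (hK : IsRegularCone K) {ϑ : ℝ} {F : E → ℝ} (hF : IsLHSCB K ϑ F)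
    {x : E} (hx : x ∈ interior K) : Hess F x x = - gradient F x := by
  have hl : HasDerivAt (fun t : ℝ => t • x) x 1 := by
    simpa using (hasDerivAt_id (1:ℝ)).smul_const x
  have h1 : HasDerivAt (fun t : ℝ => gradient F (t • x)) (Hess F x x) 1 := by
    refine HasFDerivAt.comp_hasDerivAt (l := fun y => gradient F y) 1 ?_ hl
    simpa using hasFDerivAt_gradient isOpen_interior hF.contDiff hx
  have h2 : HasDerivAt (fun t : ℝ => gradient F (t • x)) (- gradient F x) 1 := by
    have := (hasDerivAt_inv (one_ne_zero (α := ℝ))).smul_const (gradient F x)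
    simp only [one_pow, inv_one, neg_smul, one_smul] at this
    refine this.congr_of_eventuallyEq ?_
    filter_upwards [lt_mem_nhds (zero_lt_one (α := ℝ))] with t ht
    exact gradient_smul' hK hF hx ht
  exact h1.unique h2

lemma inner_gradient_self {K : Set E} (hK : IsRegularCone K) {ϑ : ℝ} {F : E → ℝ}
    (hF : IsLHSCB K ϑ F) {x : E} (hx : x ∈ interior K) : ⟪gradient F x, x⟫ = -ϑ := by
  have hl : HasDerivAt (fun t : ℝ => t • x) x 1 := by
    simpa using (hasDerivAt_id (1:ℝ)).smul_const x
  have hd : DifferentiableAt ℝ F x :=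
    (hF.contDiff.contDiffAt (isOpen_interior.mem_nhds hx)).differentiableAt (by norm_num)
  have h1 : HasDerivAt (fun t : ℝ => F (t • x)) (fderiv ℝ F x x) 1 := by
    refine HasFDerivAt.comp_hasDerivAt (l := F) 1 ?_ hl
    simpa using hd.hasFDerivAt
  have h2 : HasDerivAt (fun t : ℝ => F (t • x)) (-ϑ) 1 := by
    have := ((Real.hasDerivAt_log (one_ne_zero (α := ℝ))).const_mul ϑ).const_sub (F x)
    simp only [inv_one, mul_one] at this
    refine this.congr_of_eventuallyEq ?_
    filter_upwards [lt_mem_nhds (zero_lt_one (α := ℝ))] with t ht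
    exact hF.log_hom x hx t ht
  rw [inner_gradient]
  exact h1.unique h2

lemma hess_nonneg {K : Set E} {ϑ : ℝ} {F : E → ℝ} (hF : IsLHSCB K ϑ F)
    {x : E} (hx : x ∈ interior K) (v : E) : 0 ≤ ⟪Hess F x v, v⟫ := by
  by_cases hv : v = 0
  · simp [hv]
  · exact (hF.hess_posdef x hx v hv).le

lemma cs_aux {K : Set E} {ϑ : ℝ} {F : E → ℝ} (hF : IsLHSCB K ϑ F)
    {x : E} (hx : x ∈ interior K) (v w : E) :
    ⟪Hess F x v, w⟫ ≤ √⟪Hess F x v, v⟫ * √⟪Hess F x w, w⟫ := by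
  rw [← Real.sqrt_mul (hess_nonneg hF hx v)]
  refine Real.le_sqrt_of_sq_le ?_
  have h : ∀ t : ℝ, 0 ≤ ⟪Hess F x w, w⟫ * (t * t) + (2 * ⟪Hess F x v, w⟫) * t
      + ⟪Hess F x v, v⟫ := by
    intro t
    have h := hess_nonneg hF hx (v + t • w)
    simp only [map_add, map_smul, inner_add_left, inner_add_right, inner_smul_left,
      inner_smul_right, hess_symm isOpen_interior hF.contDiff hx w v] at h
    simp at h
    linarith
  have := discrim_le_zero h
  rw [discrim] at this
  nlinarith

lemma main_int {K : Set E} (hK : IsRegularCone K) {ϑ : ℝ} {F : E → ℝ} (hF : IsLHSCB K ϑ F)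
    {x u : E} (hx : x ∈ interior K) (hu : u ∈ interior K) :
    localNorm F x u ≤ ⟪-gradient F x, u⟫ := by
  by_cases hu0 : u = 0
  · simp [hu0, localNorm]
  have mem : ∀ t : ℝ, 0 ≤ t → x + t • u ∈ interior K := fun t ht =>
    add_mem_interior' hK hx (hK.2.2.1 u (interior_subset hu) t ht)
  have hl : ∀ t : ℝ, HasDerivAt (fun t : ℝ => x + t • u) u t := fun t => by
    simpa using ((hasDerivAt_id t).smul_const u).const_add x
  have := scalar_aux (fun t => ⟪gradient F (x + t • u), u⟫)
    (fun t => ⟪Hess F (x + t • u) u, u⟫) (fun t => ⟪D3 F (x + t • u) u u, u⟫)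
    ?_ ?_ ?_ ?_ ?_
  · simpa [localNorm] using this
  · intro t ht
    have h1 := (hasFDerivAt_gradient isOpen_interior hF.contDiff (mem t ht)).comp_hasDerivAt t (hl t)
    simpa using h1.inner ℝ (hasDerivAt_const t u)
  · intro t ht
    have h1 := (hasFDerivAt_hess isOpen_interior hF.contDiff (mem t ht)).comp_hasDerivAt t (hl t)
    have h2 := h1.clm_apply (hasDerivAt_const t u)
    simpa [D3] using h2.inner ℝ (hasDerivAt_const t u)
  · intro t ht
    exact hF.hess_posdef _ (mem t ht) u hu0
  · intro t ht
    have := hF.self_conc _ (mem t ht) (-u) u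
    simpa [D3, localNorm] using this
  · have hc : ContinuousAt (fun y => gradient F y) u :=
      (hasFDerivAt_gradient isOpen_interior hF.contDiff hu).continuousAt
    have l1 : Tendsto (fun t : ℝ => t⁻¹ • x + u) atTop (𝓝 u) := by
      simpa using ((tendsto_inv_atTop_zero (𝕜 := ℝ)).smul_const x).add_const u
    have l2 := (tendsto_inv_atTop_zero (𝕜 := ℝ)).mul
      ((hc.tendsto.comp l1).inner (tendsto_const_nhds (x := u)))
    rw [zero_mul] at l2
    refine l2.congr' ?_
    filter_upwards [eventually_gt_atTop 0] with t ht
    have h1 : t⁻¹ • x + u ∈ interior K :=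
      add_mem_interior' hK (smul_mem_interior' hK hx (inv_pos.2 ht)) (interior_subset hu)
    have h2 := gradient_smul' hK hF h1 ht
    have h3 : t • (t⁻¹ • x + u) = x + t • u := by
      rw [smul_add, smul_smul, mul_inv_cancel₀ ht.ne', one_smul]
    rw [h3] at h2
    simp [h2, inner_smul_left]

lemma main_K {K : Set E} (hK : IsRegularCone K) {ϑ : ℝ} {F : E → ℝ} (hF : IsLHSCB K ϑ F)
    {x u : E} (hx : x ∈ interior K) (hu : u ∈ K) :
    localNorm F x u ≤ ⟪-gradient F x, u⟫ := by
  have hcl : u ∈ closure (interior K) := by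
    rw [hK.2.1.closure_interior_eq_closure_of_nonempty_interior hK.2.2.2.2]
    exact subset_closure hu
  have hclosed : IsClosed {v : E | localNorm F x v ≤ ⟪-gradient F x, v⟫} := by
    apply isClosed_le
    · unfold localNorm; fun_prop
    · fun_prop
  exact closure_minimal (fun v hv => main_int hK hF hx hv) hclosed hcl

/-- For a ϑ-LHSCB `F` on a regular cone `K`, for every `x ∈ int K` and `u ∈ K`:
`⟨−F'(x), u⟩ ≤ √ϑ ‖u‖ₓ ≤ √ϑ ⟨−F'(x), u⟩`. -/
theorem stmt7 {n : ℕ} (K : Set (EuclideanSpace ℝ (Fin n))) (ϑ : ℝ)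
    (F : EuclideanSpace ℝ (Fin n) → ℝ)
    (hK : IsRegularCone K) (hF : IsLHSCB K ϑ F)
    (x : EuclideanSpace ℝ (Fin n)) (hx : x ∈ interior K)
    (u : EuclideanSpace ℝ (Fin n)) (hu : u ∈ K) :
    ⟪-gradient F x, u⟫ ≤ Real.sqrt ϑ * localNorm F x u ∧
    Real.sqrt ϑ * localNorm F x u ≤ Real.sqrt ϑ * ⟪-gradient F x, u⟫ := by
  constructor
  · have h := cs_aux hF hx x u
    rw [hess_self hK hF hx, inner_neg_left (gradient F x) x, inner_gradient_self hK hF hx,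
      neg_neg] at h
    exact h
  · exact mul_le_mul_of_nonneg_left (main_K hK hF hx hu) (Real.sqrt_nonneg _)
end
end
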